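/- Let R be a commutative F_p-algebra with a derivation ∂ and f ∈ R. Then (∂ ∘ f∂ ∘ f∂ ∘ ⋯ ∘ f∂)(f) = −∂^(p−1)(f^(p−1)), where the left side is the composite operator with p−1 occurrences of ∂ alternating with multiplication by f, applied to f. -/

import Mathlib

/-!
Adjoin to `R` a variable `t` with `∂t = 1`. The operator `(f∂)^p` is again a derivation, so it maps
`t ^ (k + 1)` to `(k + 1) t ^ k (f∂)^p t`; for `0 < k < p - 1` this determines the coefficient of
`∂ ^ k` in the differential operator `g ↦ (f∂)^(p-1) (f g)`, which turns out to be zero. What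
remains is the identity `(f∂)^(p-1) (f g) = f^p ∂^(p-1) g + (f∂)^(p-1) (f) g`, a form of
Hochschild's formula with one `∂` cancelled on the right. At `g = f^(p-1)` its left side vanishes
because `∂ (f^p) = 0`, and the Evans–Fuchs formula multiplied by `f^p` is left. To cancel `f^p`,
replace `f` by `f + s` for a new constant `s`, and put `s = 0` at the end.
-/

open Polynomial Finset
open scoped Nat

section Iterates

variable {A R : Type*} [CommSemiring A] [CommRing R] [Algebra A R] (d : Derivation A R R)

theorem derivation_iterate_mul (n : ℕ) (a b : R) :
    d^[n] (a * b) = ∑ ij ∈ antidiagonal n, n.choose ij.1 • (d^[ij.1] a * d^[ij.2] b) := by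
  induction n with
  | zero => simp
  | succ n ih =>
    rw [sum_antidiagonal_choose_succ_nsmul (fun i j ↦ d^[i] a * d^[j] b) n]
    simp only [Function.iterate_succ_apply', ih, map_sum, map_nsmul, d.leibniz, smul_add,
      sum_add_distrib, smul_eq_mul, add_right_inj]
    refine sum_congr rfl fun ⟨i, j⟩ hij ↦ ?_
    rw [n.choose_symm_of_eq_add (HasAntidiagonal.mem_antidiagonal.1 hij).symm, mul_comm]

theorem derivation_iterate_char_mul (p : ℕ) [hp : Fact p.Prime] [CharP R p] (a b : R) :
    d^[p] (a * b) = a * d^[p] b + b * d^[p] a := by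
  have interior : ∀ ij ∈ antidiagonal p, ij ∉ ({(0, p), (p, 0)} : Finset (ℕ × ℕ)) →
      p.choose ij.1 • (d^[ij.1] a * d^[ij.2] b) = 0 := by
    rintro ⟨i, j⟩ hij hne
    rw [HasAntidiagonal.mem_antidiagonal] at hij
    simp only [mem_insert, mem_singleton, Prod.mk.injEq] at hne
    have : p ∣ p.choose i := hp.out.dvd_choose_self (by omega) (by omega)
    rw [nsmul_eq_mul, (CharP.cast_eq_zero_iff R p _).2 this, zero_mul]
  rw [derivation_iterate_mul, ← sum_subset (by simp [insert_subset_iff]) interior,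
    sum_pair (by simp [hp.out.ne_zero.symm])]
  simp [mul_comm]

/-- The `p`-th power of a derivation of a ring of characteristic `p`, as a derivation. -/
def derivationPowChar (p : ℕ) [Fact p.Prime] [CharP R p] : Derivation A R R :=
  Derivation.mk' (d.toLinearMap ^ p) fun a b ↦ by
    simpa [Module.End.pow_apply] using derivation_iterate_char_mul d p a b

theorem derivationPowChar_apply (p : ℕ) [Fact p.Prime] [CharP R p] (a : R) :
    derivationPowChar d p a = d^[p] a :=
  Module.End.pow_apply ..

theorem exists_derivation_iterate_smul_mul_eq_sum (f : R) (n : ℕ) :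
    ∃ c : ℕ → R, c n = f ^ (n + 1) ∧
      ∀ g, (f • d)^[n] (f * g) = ∑ k ∈ range (n + 1), c k * d^[k] g := by
  suffices ∃ c : ℕ → R, (∀ k, n < k → c k = 0) ∧ c n = f ^ (n + 1) ∧
      ∀ g, (f • d)^[n] (f * g) = ∑ k ∈ range (n + 1), c k * d^[k] g from
    this.imp fun _ h ↦ h.2
  induction n with
  | zero => exact ⟨Pi.single 0 f, fun k hk ↦ Pi.single_eq_of_ne hk.ne' _, by simp, by simp⟩
  | succ n ih =>
    obtain ⟨c, c_gt, c_top, hc⟩ := ih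
    let shift : ℕ → R := fun k ↦ k.casesOn 0 c
    refine ⟨fun k ↦ f * (d (c k) + shift k), fun k hk ↦ ?_, ?_, fun g ↦ ?_⟩
    · obtain ⟨k, rfl⟩ := Nat.exists_eq_add_of_lt hk
      simp [shift, c_gt _ (show n < n + 1 + k + 1 by omega), c_gt _ (show n < n + 1 + k by omega)]
    · simp [shift, c_gt, c_top, pow_succ']
    · have derive_coeff : ∑ k ∈ range (n + 1), d (c k) * d^[k] g =
          ∑ k ∈ range (n + 2), d (c k) * d^[k] g := by
        simp [sum_range_succ _ (n + 1), c_gt]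
      have derive_arg : ∑ k ∈ range (n + 1), c k * d^[k + 1] g =
          ∑ k ∈ range (n + 2), shift k * d^[k] g := by
        simp [sum_range_succ' _ (n + 1), shift]
      calc (f • d)^[n + 1] (f * g)
        _ = f * ∑ k ∈ range (n + 1), (d (c k) * d^[k] g + c k * d^[k + 1] g) := by
          simp only [Function.iterate_succ_apply', hc, Derivation.smul_apply, map_sum, d.leibniz,
            smul_eq_mul, add_comm, mul_comm (d^[_] g), mul_sum]
        _ = ∑ k ∈ range (n + 2), f * (d (c k) + shift k) * d^[k] g := by
          rw [sum_add_distrib, derive_coeff, derive_arg, ← sum_add_distrib, mul_sum]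
          exact sum_congr rfl fun k _ ↦ by ring

end Iterates

section PolynomialExtension

variable {A R : Type*} [CommRing A] [CommRing R] [Algebra A R] (d : Derivation A R R) (u : R[X])

/-- The extension of `d` to a derivation of `R[X]` with `X ↦ u`. It is used with `u = 1`, to adjoin
an element of derivative `1`, and with `u = 0`, to adjoin a constant. -/
noncomputable def polynomialExtension : Derivation A R[X] R[X] :=
  PolynomialModule.equivPolynomialSelf.compDer d.mapCoeffs + u • derivative'.restrictScalars A

@[simp]
theorem polynomialExtension_C (r : R) : polynomialExtension d u (C r) = C (d r) := by
  ext
  simp [polynomialExtension]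

@[simp]
theorem polynomialExtension_X : polynomialExtension d u X = u := by
  simp [polynomialExtension]

theorem eval_zero_polynomialExtension_zero (q : R[X]) :
    (polynomialExtension d 0 q).eval 0 = d (q.eval 0) := by
  simp only [polynomialExtension, zero_smul, add_zero, ← coeff_zero_eq_eval_zero]
  rfl

theorem eval_zero_polynomialExtension_zero_iterate (n : ℕ) (q : R[X]) :
    ((polynomialExtension d 0)^[n] q).eval 0 = d^[n] (q.eval 0) :=
  Function.Semiconj.iterate_right (f := eval 0) (eval_zero_polynomialExtension_zero d) n q

theorem eval_zero_smul_polynomialExtension_zero_iterate (f : R[X]) (n : ℕ) (q : R[X]) :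
    ((f • polynomialExtension d 0)^[n] q).eval 0 = (f.eval 0 • d)^[n] (q.eval 0) :=
  Function.Semiconj.iterate_right (f := eval 0) (ga := f • polynomialExtension d 0)
    (gb := f.eval 0 • d) (fun q ↦ by simp [eval_zero_polynomialExtension_zero]) n q

theorem polynomialExtension_iterate_C (n : ℕ) (r : R) :
    (polynomialExtension d u)^[n] (C r) = C (d^[n] r) :=
  (Function.Semiconj.iterate_right (polynomialExtension_C d u · |>.symm) n r).symm

theorem smul_polynomialExtension_iterate_C (f : R) (n : ℕ) (r : R) :
    (C f • polynomialExtension d u)^[n] (C r) = C ((f • d)^[n] r) :=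
  (Function.Semiconj.iterate_right (ga := f • d) (gb := C f • polynomialExtension d u)
    (fun r ↦ by simp) n r).symm

theorem polynomialExtension_one_iterate_X_pow (j k : ℕ) :
    (polynomialExtension d 1)^[j] (X ^ k) = k.descFactorial j • X ^ (k - j) := by
  induction j with
  | zero => simp
  | succ j ih =>
    rw [Function.iterate_succ_apply', ih, map_nsmul, Derivation.leibniz_pow, polynomialExtension_X,
      smul_eq_mul, mul_one, smul_smul, Nat.descFactorial_succ, mul_comm, Nat.sub_sub]

theorem coeff_zero_polynomialExtension_one_iterate_X_pow (j k : ℕ) :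
    ((polynomialExtension d 1)^[j] (X ^ k)).coeff 0 = if j = k then (k ! : R) else 0 := by
  rw [polynomialExtension_one_iterate_X_pow, coeff_smul, coeff_X_pow]
  obtain hjk | rfl | hkj := lt_trichotomy j k
  · simp [hjk.ne, (Nat.sub_pos_of_lt hjk).ne]
  · simp [Nat.descFactorial_self]
  · simp [hkj.ne', Nat.descFactorial_of_lt hkj]

end PolynomialExtension

section Hochschild

variable {A R : Type*} [CommRing A] [CommRing R] [Algebra A R] (d : Derivation A R R)

theorem coeff_zero_smul_polynomialExtension_one_iterate_mul_X_pow (p : ℕ) [hp : Fact p.Prime]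
    [CharP R p] (q : R[X]) {k : ℕ} (hk : k ≠ 0) (hkp : k + 1 < p) :
    ((q • polynomialExtension d 1)^[p - 1] (q * X ^ k)).coeff 0 = 0 := by
  set T := q • polynomialExtension d 1 with hT
  have T_X_pow : T (X ^ (k + 1)) = (k + 1) • (q * X ^ k) := by
    rw [hT, Derivation.smul_apply, Derivation.leibniz_pow, polynomialExtension_X,
      Nat.add_sub_cancel, smul_eq_mul, smul_eq_mul, mul_one, mul_smul_comm]
  have succ_smul_iterate :
      (k + 1) • T^[p - 1] (q * X ^ k) = (k + 1) • (X ^ k * derivationPowChar T p X) :=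
    calc (k + 1) • T^[p - 1] (q * X ^ k)
      _ = T^[p - 1] (T (X ^ (k + 1))) := by rw [T_X_pow, iterate_map_nsmul]
      _ = derivationPowChar T p (X ^ (k + 1)) := by
        rw [derivationPowChar_apply, ← Function.iterate_succ_apply T,
          Nat.succ_eq_add_one, Nat.sub_add_cancel hp.out.one_le]
      _ = (k + 1) • (X ^ k * derivationPowChar T p X) := Derivation.leibniz_pow ..
  have isUnit_succ : IsUnit ((k + 1 : ℕ) : R) :=
    (CharP.isUnit_natCast_iff hp.out).2 <| Nat.not_dvd_of_pos_of_lt k.succ_pos hkp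
  rw [← isUnit_succ.mul_right_eq_zero, ← nsmul_eq_mul, ← coeff_smul, succ_smul_iterate, coeff_smul,
    mul_coeff_zero, coeff_X_pow, if_neg hk.symm, zero_mul, smul_zero]

theorem exists_derivation_iterate_smul_mul_eq_add (p : ℕ) [hp : Fact p.Prime] [CharP R p] (f : R) :
    ∃ c : R, ∀ g, (f • d)^[p - 1] (f * g) = f ^ p * d^[p - 1] g + c * g := by
  obtain ⟨n, rfl⟩ : ∃ n, p = n + 2 := Nat.exists_eq_add_of_le' hp.out.two_le
  rw [show n + 2 - 1 = n + 1 from rfl]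
  obtain ⟨c, c_top, hc⟩ :=
    exists_derivation_iterate_smul_mul_eq_sum (polynomialExtension d 1) (C f) (n + 1)
  have expansion (g : R) : (f • d)^[n + 1] (f * g) =
      ∑ k ∈ range (n + 2), (c k).coeff 0 * d^[k] g := by
    have := congr_arg (coeff · 0) (hc (C g))
    simpa only [← C_mul, polynomialExtension_iterate_C, smul_polynomialExtension_iterate_C,
      finsetSum_coeff, mul_coeff_zero, coeff_C_zero] using this
  have coeff_eq_zero (k : ℕ) (hk : k ≠ 0) (hkn : k < n + 1) : (c k).coeff 0 = 0 := by
    have mul_factorial : (c k).coeff 0 * k ! = 0 := by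
      rw [← coeff_zero_smul_polynomialExtension_one_iterate_mul_X_pow d (n + 2) (C f) hk
        (by omega), show n + 2 - 1 = n + 1 from rfl, hc]
      simp only [finsetSum_coeff, mul_coeff_zero,
        coeff_zero_polynomialExtension_one_iterate_X_pow, mul_ite, mul_zero, sum_ite_eq', mem_range]
      rw [if_pos (by omega)]
    have isUnit_factorial : IsUnit (k ! : R) :=
      (IsUnit.natCast_factorial_iff_of_charP (n + 2)).2 (by omega)
    exact isUnit_factorial.mul_left_eq_zero.1 mul_factorial
  refine ⟨(c 0).coeff 0, fun g ↦ ?_⟩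
  rw [expansion, sum_range_succ, sum_range_succ', sum_eq_zero fun k hk ↦ ?_, c_top]
  · rw [← C_pow, coeff_C_zero, zero_add, Function.iterate_zero_apply, add_comm]
  · rw [coeff_eq_zero _ k.succ_ne_zero (by simpa using hk), zero_mul]

theorem derivation_iterate_smul_mul_eq_add (p : ℕ) [hp : Fact p.Prime] [CharP R p] (f g : R) :
    (f • d)^[p - 1] (f * g) = f ^ p * d^[p - 1] g + (f • d)^[p - 1] f * g := by
  obtain ⟨c, hc⟩ := exists_derivation_iterate_smul_mul_eq_add d p f
  have iterate_one : d^[p - 1] 1 = 0 := by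
    rw [← Nat.sub_add_cancel (Nat.sub_pos_of_lt hp.out.one_lt), Function.iterate_succ_apply,
      d.map_one_eq_zero, iterate_map_zero]
  have hc_one : (f • d)^[p - 1] f = c := by
    simpa only [iterate_one, mul_one, mul_zero, zero_add] using hc 1
  rw [hc, hc_one]

theorem derivation_iterate_smul_eq_neg_of_isRegular (p : ℕ) [hp : Fact p.Prime] [CharP R p]
    {f : R} (hf : IsRegular f) :
    d ((f • d)^[p - 2] f) = -d^[p - 1] (f ^ (p - 1)) := by
  have hochschild := derivation_iterate_smul_mul_eq_add d p f (f ^ (p - 1))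
  obtain ⟨n, rfl⟩ : ∃ n, p = n + 2 := Nat.exists_eq_add_of_le' hp.out.two_le
  simp only [show n + 2 - 1 = n + 1 from rfl, show n + 2 - 2 = n from rfl] at hochschild ⊢
  have d_pow_char : (f • d) (f ^ (n + 2)) = 0 := by
    rw [Derivation.leibniz_pow, ← Nat.cast_smul_eq_nsmul R, CharP.cast_eq_zero, zero_smul]
  rw [← pow_succ', Function.iterate_succ_apply, d_pow_char, iterate_map_zero,
    Function.iterate_succ_apply' (f • d), Derivation.smul_apply, smul_eq_mul] at hochschild
  have mul_pow_eq_zero :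
      f ^ (n + 2) * (d ((f • d)^[n] f) + d^[n + 1] (f ^ (n + 1))) = 0 := by
    rw [hochschild]
    ring
  exact eq_neg_of_add_eq_zero_left <|
    (hf.pow (n + 2)).left <| mul_pow_eq_zero.trans (mul_zero _).symm

end Hochschild

/-- Evans–Fuchs formula: for a derivation `∂` of a commutative ring `R` of prime
characteristic `p` and `f ∈ R`, the composite operator `∂ ∘ f∂ ∘ ⋯ ∘ f∂`
(with `p - 1` occurrences of `∂` in total) applied to `f` equals `-∂^(p-1)(f^(p-1))`. -/
theorem stmt5 {R : Type*} [CommRing R] (p : ℕ) [Fact p.Prime] [CharP R p]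
    (d : Derivation ℤ R R) (f : R) :
    (d.toLinearMap * (f • d.toLinearMap) ^ (p - 2)) f
      = - ((d.toLinearMap ^ (p - 1)) (f ^ (p - 1))) := by
  have h := congr_arg (eval 0) <| derivation_iterate_smul_eq_neg_of_isRegular
    (polynomialExtension d 0) p (monic_X_add_C f).isRegular
  simp only [eval_neg, eval_pow, eval_zero_polynomialExtension_zero,
    eval_zero_polynomialExtension_zero_iterate, eval_zero_smul_polynomialExtension_zero_iterate,
    eval_add, eval_X, eval_C, zero_add] at h
  rw [Module.End.mul_apply, Module.End.pow_apply, Module.End.pow_apply]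
  exact h
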